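/- Let p be an odd prime and k an algebraically closed field of characteristic p. Let g = p and let f(x) = Σ_{i=1}^{2p+1} c_i x^i in k[x] with c_{2p+1} = 1 and c_1 ≠ 0, and let A be the p×p matrix with entries a_{ij} = κ_{pi−j}, where f(x)^{(p−1)/2} = Σ_m κ_m x^m. If rank(A) = 1, then κ_j = 0 for every index j not congruent to (p−1)/2 modulo p; that is, f(x)^{(p−1)/2} = x^{(p−1)/2} · h(x^p) for some polynomial h ∈ k[x]. -/

import Mathlib

open Polynomial

/-!
Cut the coefficients of `F = f ^ n` into blocks of length `p`. Read from right to left, the first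
`p` columns of the Cartier–Manin matrix list these blocks as rows, so if the matrix has rank at
most one, all blocks are multiples of a single one. Hence `F = v * w(X ^ p)` with `v.natDegree <
p`, and `v` has degree `F.natDegree % p` and order of vanishing `F.natTrailingDegree % p`. As `F`
has degree `n * (2 * g + 1)` and vanishes to order `n` at `0`, both remainders equal `n` when `p`
divides the genus `g`, so `v` is a scalar multiple of `X ^ n`.
-/

section Polynomial

variable {R : Type*}

lemma natTrailingDegree_pow [Semiring R] [NoZeroDivisors R] (f : R[X]) (n : ℕ) :
    (f ^ n).natTrailingDegree = n * f.natTrailingDegree := by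
  induction n with
  | zero => simp
  | succ n ih =>
    rcases eq_or_ne f 0 with rfl | hf
    · simp
    · rw [pow_succ, natTrailingDegree_mul (pow_ne_zero n hf) hf, ih, Nat.succ_mul]

lemma eq_C_mul_X_pow_of_natTrailingDegree_eq_natDegree [Semiring R] {f : R[X]}
    (h : f.natTrailingDegree = f.natDegree) : f = C f.leadingCoeff * X ^ f.natDegree := by
  refine (C_mul_X_pow_eq_self (Finset.card_le_one_iff.2 fun ha hb ↦ ?_)).symm
  linarith [natTrailingDegree_le_of_mem_supp _ ha, natTrailingDegree_le_of_mem_supp _ hb,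
    le_natDegree_of_mem_supp _ ha, le_natDegree_of_mem_supp _ hb]

lemma coeff_sum_C_mul_X_pow [Semiring R] (s : Finset ℕ) (c : ℕ → R) (j : ℕ) :
    (∑ i ∈ s, C (c i) * X ^ i).coeff j = if j ∈ s then c j else 0 := by
  simp only [finsetSum_coeff, coeff_C_mul_X_pow, Finset.sum_ite_eq]

lemma natDegree_sum_Icc_C_mul_X_pow [Semiring R] {a b : ℕ} (hab : a ≤ b) {c : ℕ → R}
    (hc : c b ≠ 0) : (∑ i ∈ Finset.Icc a b, C (c i) * X ^ i).natDegree = b := by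
  refine natDegree_eq_of_le_of_coeff_ne_zero (natDegree_sum_le_of_forall_le _ _ fun i hi ↦ ?_) ?_
  · exact (natDegree_C_mul_X_pow_le _ _).trans (Finset.mem_Icc.1 hi).2
  · rwa [coeff_sum_C_mul_X_pow, if_pos (Finset.right_mem_Icc.2 hab)]

lemma natTrailingDegree_sum_Icc_C_mul_X_pow [Semiring R] {a b : ℕ} (hab : a ≤ b) {c : ℕ → R}
    (hc : c a ≠ 0) : (∑ i ∈ Finset.Icc a b, C (c i) * X ^ i).natTrailingDegree = a := by
  have hcoeff : (∑ i ∈ Finset.Icc a b, C (c i) * X ^ i).coeff a ≠ 0 := by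
    rwa [coeff_sum_C_mul_X_pow, if_pos (Finset.left_mem_Icc.2 hab)]
  refine (natTrailingDegree_le_of_ne_zero hcoeff).antisymm
    (le_natTrailingDegree (fun h ↦ hcoeff (by rw [h, coeff_zero])) fun j hj ↦ ?_)
  rw [coeff_sum_C_mul_X_pow, if_neg fun h ↦ hj.not_ge (Finset.mem_Icc.1 h).1]

section Expand

variable [CommSemiring R] {p : ℕ}

lemma natTrailingDegree_expand (hp : 0 < p) (f : R[X]) :
    (expand R p f).natTrailingDegree = f.natTrailingDegree * p := by
  rcases eq_or_ne f 0 with rfl | hf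
  · simp
  refine (natTrailingDegree_le_of_ne_zero ?_).antisymm
    (le_natTrailingDegree ((expand_ne_zero hp).2 hf) fun j hj ↦ ?_)
  · rwa [coeff_expand_mul hp, coeff_natTrailingDegree_ne_zero]
  · rw [coeff_expand hp]
    split_ifs
    · exact coeff_eq_zero_of_lt_natTrailingDegree (Nat.div_lt_of_lt_mul (by rwa [mul_comm]))
    · rfl

lemma coeff_X_pow_mul_expand_eq_zero (hp : 0 < p) (h : R[X]) {n j : ℕ} (hj : ¬j ≡ n [MOD p]) :
    (X ^ n * expand R p h).coeff j = 0 := by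
  rw [coeff_X_pow_mul']
  split_ifs with hnj
  · rw [coeff_expand hp, if_neg fun hdvd ↦ hj ((Nat.modEq_iff_dvd' hnj).2 hdvd).symm]
  · rfl

lemma coeff_mul_expand {v : R[X]} (hv : v.natDegree < p) (w : R[X]) (i : ℕ) {j : ℕ} (hj : j < p) :
    (v * expand R p w).coeff (p * i + j) = w.coeff i * v.coeff j := by
  have hp : 0 < p := hj.pos
  rw [coeff_mul, Finset.sum_eq_single (j, p * i)]
  · rw [coeff_expand_mul' hp, mul_comm]
  · rintro ⟨a, b⟩ hab hne
    rw [Finset.HasAntidiagonal.mem_antidiagonal] at hab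
    rcases lt_or_ge v.natDegree a with ha | ha
    · rw [coeff_eq_zero_of_natDegree_lt ha, zero_mul]
    · rw [coeff_expand hp, if_neg, mul_zero]
      rintro ⟨l, rfl⟩
      have haj : a = j := by
        simpa [Nat.add_mod, Nat.mod_eq_of_lt hj, Nat.mod_eq_of_lt (ha.trans_lt hv)]
          using congrArg (· % p) hab
      exact hne (Prod.ext haj (by lia))
  · exact fun h ↦ (h (Finset.HasAntidiagonal.mem_antidiagonal.2 (add_comm _ _))).elim

lemma mul_expand_eq_X_pow_mul_expand [NoZeroDivisors R] {v w : R[X]} {n : ℕ}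
    (hv : v.natDegree < p) (hn : n < p)
    (hdeg : (v * expand R p w).natDegree ≡ n [MOD p])
    (htrail : (v * expand R p w).natTrailingDegree ≡ n [MOD p]) :
    ∃ h : R[X], v * expand R p w = X ^ n * expand R p h := by
  rcases eq_or_ne (v * expand R p w) 0 with hzero | hne
  · exact ⟨0, by rw [hzero, map_zero, mul_zero]⟩
  have ⟨hv0, hw0⟩ := ne_zero_and_ne_zero_of_mul hne
  rw [natDegree_mul hv0 hw0, natDegree_expand] at hdeg
  rw [natTrailingDegree_mul hv0 hw0, natTrailingDegree_expand hn.pos] at htrail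
  have hvdeg : v.natDegree = n :=
    Nat.ModEq.eq_of_lt_of_lt (by simpa [Nat.ModEq] using hdeg) hv hn
  have hvtrail : v.natTrailingDegree = n :=
    Nat.ModEq.eq_of_lt_of_lt (by simpa [Nat.ModEq] using htrail)
      ((natTrailingDegree_le_natDegree v).trans_lt hv) hn
  refine ⟨C v.leadingCoeff * w, ?_⟩
  rw [map_mul, expand_C, ← mul_assoc, mul_comm (X ^ n), ← hvdeg,
    ← eq_C_mul_X_pow_of_natTrailingDegree_eq_natDegree (hvtrail.trans hvdeg.symm)]

end Expand

end Polynomial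

lemma exists_eq_vecMulVec_of_rank_le_one {k m n : Type*} [Field k] [Fintype n] [Finite m]
    {A : Matrix m n k} (h : A.rank ≤ 1) : ∃ w v, A = Matrix.vecMulVec w v := by
  rw [Matrix.rank_eq_finrank_span_row, finrank_le_one_iff] at h
  obtain ⟨v, hv⟩ := h
  choose w hw using fun i ↦ hv ⟨A.row i, Submodule.subset_span ⟨i, rfl⟩⟩
  exact ⟨w, v, Matrix.ext fun i j ↦ (congrFun (congrArg Subtype.val (hw i)) j).symm⟩

/-- The `g × g` matrix with entries `κ_{pi - j}` for `1 ≤ i, j ≤ g`, where `F = ∑ κ_m x ^ m`. For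
`F = f ^ ((p - 1) / 2)` it is the Cartier–Manin matrix of the genus `g` curve `y ^ 2 = f(x)`. As
`Fin g` starts at `0`, both indices are shifted by one. If `p * i < j`, truncated subtraction gives
the entry `κ_0` rather than `0`; the two agree when `F` has no constant term. -/
def cartierManinMatrix {R : Type*} [Semiring R] (p g : ℕ) (F : R[X]) : Matrix (Fin g) (Fin g) R :=
  Matrix.of fun i j ↦ F.coeff (p * (i + 1) - (j + 1))

lemma exists_eq_mul_expand_of_rank_cartierManinMatrix_le_one {k : Type*} [Field k] {p g : ℕ}
    {F : k[X]} (hpg : p ≤ g) (hF : F.natDegree < p * g)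
    (hrank : (cartierManinMatrix p g F).rank ≤ 1) :
    ∃ v w : k[X], v.natDegree < p ∧ F = v * expand k p w := by
  classical
  have hp : 0 < p := Nat.pos_of_mul_pos_right (Nat.zero_lt_of_lt hF)
  obtain ⟨w, v, hwv⟩ := exists_eq_vecMulVec_of_rank_le_one hrank
  let block : Fin p → k := fun j ↦ v (Fin.castLE hpg j.rev)
  have hblock : (ofFn p block).natDegree < p := ofFn_natDegree_lt hp block
  have hcoeff (i : Fin g) (j : Fin p) : F.coeff (p * i + j) = w i * block j := by
    have hindex : p * (i + 1) - (p - (j + 1) + 1) = p * i + j := by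
      rw [mul_add_one]
      omega
    simpa [cartierManinMatrix, Matrix.vecMulVec_apply, hindex]
      using congrFun₂ hwv i (Fin.castLE hpg j.rev)
  refine ⟨ofFn p block, ofFn g w, hblock, Polynomial.ext fun m ↦ ?_⟩
  have hmod : m % p < p := Nat.mod_lt m hp
  rw [← Nat.div_add_mod m p, coeff_mul_expand hblock _ _ hmod, ofFn_coeff_eq_val_of_lt _ hmod]
  rcases lt_or_ge (m / p) g with hdiv | hdiv
  · rw [ofFn_coeff_eq_val_of_lt _ hdiv]
    exact hcoeff ⟨m / p, hdiv⟩ ⟨m % p, hmod⟩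
  · rw [ofFn_coeff_eq_zero_of_ge _ hdiv, zero_mul]
    exact coeff_eq_zero_of_natDegree_lt
      (hF.trans_le ((Nat.mul_le_mul_left p hdiv).trans (Nat.le_add_right _ _)))

theorem coeff_vanish_of_rank_one_genus_eq_p_general {k : Type*} [Field k] {p g n : ℕ}
    (hg : 0 < g) (hpg : p ∣ g) (hn : 2 * n < p) {f : k[X]}
    (hdeg : f.natDegree = 2 * g + 1) (htrail : f.natTrailingDegree = 1)
    (hrank : (cartierManinMatrix p g (f ^ n)).rank ≤ 1) :
    (∀ j : ℕ, j % p ≠ n → (f ^ n).coeff j = 0) ∧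
    ∃ h : k[X], f ^ n = X ^ n * h.comp (X ^ p) := by
  have hp : 0 < p := by lia
  have hnp : n < p := by lia
  have hle : p ≤ g := Nat.le_of_dvd hg hpg
  have hFdeg : (f ^ n).natDegree = n * (2 * g + 1) := by rw [natDegree_pow, hdeg]
  have hFtrail : (f ^ n).natTrailingDegree = n := by
    rw [natTrailingDegree_pow, htrail, mul_one]
  have hlt : (f ^ n).natDegree < p * g := by rw [hFdeg]; nlinarith
  have hmod : (f ^ n).natDegree ≡ n [MOD p] := by
    obtain ⟨t, rfl⟩ := hpg
    rw [hFdeg, show n * (2 * (p * t) + 1) = n + p * (2 * n * t) by ring]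
    exact Nat.add_mul_mod_self_left n p _
  obtain ⟨v, w, hv, hF⟩ := exists_eq_mul_expand_of_rank_cartierManinMatrix_le_one hle hlt hrank
  obtain ⟨h, hh⟩ := mul_expand_eq_X_pow_mul_expand (w := w) hv hnp (hF ▸ hmod)
    (hF ▸ congrArg (· % p) hFtrail)
  refine ⟨fun j hj ↦ ?_, h, by rw [← expand_eq_comp_X_pow, hF, hh]⟩
  rw [hF, hh]
  exact coeff_X_pow_mul_expand_eq_zero hp h fun hjn ↦ hj (Nat.mod_eq_of_modEq hjn hnp)

/-- For `g = p`, `c 1 ≠ 0`: if the Cartier–Manin matrix has rank one, then `κ_j = 0`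
for every `j` not congruent to `(p-1)/2 mod p`; that is,
`f ^ ((p-1)/2) = X ^ ((p-1)/2) * h(X^p)` for some polynomial `h`. -/
theorem coeff_vanish_of_rank_one_genus_eq_p
    (p : ℕ) (hp : p.Prime) (hodd : Odd p)
    (k : Type*) [Field k] [IsAlgClosed k] [CharP k p]
    (c : ℕ → k) (hclead : c (2 * p + 1) = 1) (hc1 : c 1 ≠ 0)
    (f : k[X]) (hf : f = ∑ i ∈ Finset.Icc 1 (2 * p + 1), C (c i) * X ^ i)
    (A : Matrix (Fin p) (Fin p) k)
    (hA : ∀ i j : Fin p,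
      A i j = (f ^ ((p - 1) / 2)).coeff (p * ((i : ℕ) + 1) - ((j : ℕ) + 1)))
    (hrank : A.rank = 1) :
    (∀ j : ℕ, j % p ≠ (p - 1) / 2 → (f ^ ((p - 1) / 2)).coeff j = 0) ∧
    ∃ h : k[X], f ^ ((p - 1) / 2) = X ^ ((p - 1) / 2) * h.comp (X ^ p) := by
  have hp0 := hp.pos
  have hAF : A = cartierManinMatrix p p (f ^ ((p - 1) / 2)) := Matrix.ext hA
  subst hf
  exact coeff_vanish_of_rank_one_genus_eq_p_general hp0 dvd_rfl (by lia)
    (natDegree_sum_Icc_C_mul_X_pow (by lia) (hclead ▸ one_ne_zero))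
    (natTrailingDegree_sum_Icc_C_mul_X_pow (by lia) hc1) (hAF ▸ hrank.le)
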